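/- arXiv:1108.3267 — 2 statements merged into one kernel-verified Lean document; each statement's English description precedes it below -/
import Mathlib

section
/- Let (Ω, Σ, μ) be a σ-finite measure space, Φ an N-function satisfying the (δ₂,Δ₂)-condition, and w : Ω → (0,∞) measurable. Let m_w = {f essentially bounded measurable : ∫ Φ(w·|f|) dμ < ∞} with norm ‖f‖_{Φ,w} = inf{λ > 0 : ∫ Φ(w·|f|/λ) dμ ≤ 1}, and let L_Φ(μ) = {g measurable : ∫ Φ(|g|) dμ < ∞} with Luxemburg norm ‖g‖_Φ = inf{λ > 0 : ∫ Φ(|g|/λ) dμ ≤ 1}. Then the map U(f) = w·f is a linear injection from m_w into L_Φ(μ) satisfying ‖U(f)‖_Φ = ‖f‖_{Φ,w} for all f ∈ m_w, and the range U(m_w) is dense in L_Φ(μ); consequently the completion of (m_w, ‖·‖_{Φ,w}) is isometrically isomorphic to L_Φ(μ). -/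
open MeasureTheory Filter Set Topology

/-!
Since `‖w f‖ = w ‖f‖`, the two norms agree by construction, and `w > 0` gives injectivity. The
content is density. Given `g` with `∫ Φ(‖g‖) < ∞`, let `f_n` be `g / w` where `‖g‖ ≤ n w` and `0`
elsewhere, so that `‖f_n‖ ≤ n` and `g - w f_n` is the restriction of `g` to `{n w < ‖g‖}`. By the
Δ₂-condition `Φ(‖g‖ / l)` is integrable for every `l > 0`, and the sets `{n w < ‖g‖}` decrease to
the empty set because `w > 0`; by continuity from above of the finite measure `Φ(‖g‖ / l) dμ`, the
modular of `(g - w f_n) / l` tends to `0`, and once it is at most `1` the Luxemburg norm of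
`g - w f_n` is at most `l`.
-/

section Modular

variable {Ω : Type*} [MeasurableSpace Ω] {Φ : ℝ → ℝ} {μ : Measure Ω} {u : Ω → ℝ}

/-- The `(δ₂,Δ₂)`-condition: dilating the argument of `Φ` costs at most a constant factor. -/
def DeltaTwoCondition (Φ : ℝ → ℝ) : Prop :=
  ∀ k : ℝ, 0 < k → ∃ r : ℝ, 0 < r ∧ ∀ t : ℝ, 0 ≤ t → Φ (k * t) ≤ r * Φ t

/-- The Orlicz modular `∫ Φ(u) dμ`. It is meant for nonnegative profiles `u`, such as `‖g‖` or
`w ‖f‖`, so that one definition serves both the plain and the weighted space; negative values of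
`Φ` count as `0`. -/
noncomputable def orliczModular (Φ : ℝ → ℝ) (μ : Measure Ω) (u : Ω → ℝ) : ENNReal :=
  ∫⁻ ω, ENNReal.ofReal (Φ (u ω)) ∂μ

/-- The Luxemburg norm of a nonnegative profile `u`: that of a function `g` is obtained from
`u = ‖g‖` and the weighted one from `u = w ‖g‖`. If no scale `l` is admissible, the real-valued
infimum is `0` rather than `∞`. -/
noncomputable def luxemburgNorm (Φ : ℝ → ℝ) (μ : Measure Ω) (u : Ω → ℝ) : ℝ :=
  sInf {l : ℝ | 0 < l ∧ orliczModular Φ μ (fun ω => u ω / l) ≤ 1}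

lemma luxemburgNorm_nonneg : 0 ≤ luxemburgNorm Φ μ u :=
  Real.sInf_nonneg fun _ hl => hl.1.le

lemma luxemburgNorm_le {l : ℝ} (hl : 0 < l) (h : orliczModular Φ μ (fun ω => u ω / l) ≤ 1) :
    luxemburgNorm Φ μ u ≤ l :=
  csInf_le ⟨0, fun _ hl' => hl'.1.le⟩ ⟨hl, h⟩

lemma orliczModular_indicator (hΦ_zero : Φ 0 = 0) {s : Set Ω} (hs : MeasurableSet s) :
    orliczModular Φ μ (s.indicator u) = ∫⁻ ω in s, ENNReal.ofReal (Φ (u ω)) ∂μ := by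
  rw [← lintegral_indicator hs]
  refine lintegral_congr fun ω => ?_
  by_cases hω : ω ∈ s <;> simp [hω, hΦ_zero]

lemma orliczModular_const_mul_lt_top (hΔ₂ : DeltaTwoCondition Φ) (hu : 0 ≤ u) {k : ℝ} (hk : 0 < k)
    (hfin : orliczModular Φ μ u < ⊤) : orliczModular Φ μ (fun ω => k * u ω) < ⊤ := by
  obtain ⟨r, hr, hrΦ⟩ := hΔ₂ k hk
  calc ∫⁻ ω, ENNReal.ofReal (Φ (k * u ω)) ∂μ
      ≤ ∫⁻ ω, ENNReal.ofReal r * ENNReal.ofReal (Φ (u ω)) ∂μ :=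
        lintegral_mono fun ω => by
          rw [← ENNReal.ofReal_mul hr.le]
          exact ENNReal.ofReal_le_ofReal (hrΦ _ (hu ω))
    _ = ENNReal.ofReal r * orliczModular Φ μ u :=
        lintegral_const_mul' _ _ ENNReal.ofReal_ne_top
    _ < ⊤ := ENNReal.mul_lt_top ENNReal.ofReal_lt_top hfin

lemma tendsto_setLIntegral_zero_of_antitone {F : Ω → ENNReal} (hF : ∫⁻ ω, F ω ∂μ ≠ ⊤)
    {A : ℕ → Set Ω} (hA_meas : ∀ n, MeasurableSet (A n)) (hA_anti : Antitone A)
    (hA_empty : ⋂ n, A n = ∅) : Tendsto (fun n => ∫⁻ ω in A n, F ω ∂μ) atTop (𝓝 0) := by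
  have hfin : ∃ n, μ.withDensity F (A n) ≠ ⊤ :=
    ⟨0, by
      rw [withDensity_apply F (hA_meas 0)]
      exact ne_top_of_le_ne_top hF (setLIntegral_le_lintegral _ _)⟩
  have h := tendsto_measure_iInter_atTop (fun n => (hA_meas n).nullMeasurableSet) hA_anti hfin
  simpa only [hA_empty, measure_empty, Function.comp_def, withDensity_apply F (hA_meas _)] using h

lemma tendsto_luxemburgNorm_indicator (hΦ_zero : Φ 0 = 0) (hΔ₂ : DeltaTwoCondition Φ)
    (hu : 0 ≤ u) (hfin : orliczModular Φ μ u < ⊤) {A : ℕ → Set Ω}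
    (hA_meas : ∀ n, MeasurableSet (A n)) (hA_anti : Antitone A) (hA_empty : ⋂ n, A n = ∅) :
    Tendsto (fun n => luxemburgNorm Φ μ ((A n).indicator u)) atTop (𝓝 0) := by
  refine tendsto_order.2
    ⟨fun a ha => Eventually.of_forall fun n => ha.trans_le luxemburgNorm_nonneg, fun ε hε => ?_⟩
  have hfin_half : orliczModular Φ μ (fun ω => (ε / 2)⁻¹ * u ω) < ⊤ :=
    orliczModular_const_mul_lt_top hΔ₂ hu (inv_pos.2 (half_pos hε)) hfin
  have hlim := tendsto_setLIntegral_zero_of_antitone hfin_half.ne hA_meas hA_anti hA_empty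
  filter_upwards [hlim.eventually (ge_mem_nhds zero_lt_one)] with n hn
  refine (luxemburgNorm_le (half_pos hε) ?_).trans_lt (half_lt_self hε)
  have hscale : (fun ω => (A n).indicator u ω / (ε / 2)) =
      (A n).indicator fun ω => (ε / 2)⁻¹ * u ω := by
    ext ω
    by_cases hω : ω ∈ A n <;> simp [hω, div_eq_inv_mul]
  rwa [hscale, orliczModular_indicator hΦ_zero (hA_meas n)]

end Modular

section Truncation

variable {α E : Type*} [SeminormedAddCommGroup E] [NormedSpace ℝ E] {w : α → ℝ} {g : α → E}

lemma antitone_setOf_nat_mul_lt {u : α → ℝ} (hw : 0 ≤ w) :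
    Antitone fun n : ℕ => {x | n * w x < u x} :=
  fun _ _ hmn x hx => (mul_le_mul_of_nonneg_right (Nat.cast_le.2 hmn) (hw x)).trans_lt hx

lemma iInter_setOf_nat_mul_lt_eq_empty {u : α → ℝ} (hw : ∀ x, 0 < w x) :
    ⋂ n : ℕ, {x | n * w x < u x} = ∅ := by
  refine eq_empty_of_forall_notMem fun x hx => ?_
  obtain ⟨n, hn⟩ := exists_nat_ge (u x / w x)
  exact ((div_le_iff₀ (hw x)).1 hn).not_gt (mem_iInter.1 hx n)

/-- The quotient `g / w`, cut off to `0` where its norm exceeds `n`; these functions witness the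
density of `w • m_w` in the Orlicz space. -/
noncomputable def divTruncation (w : α → ℝ) (g : α → E) (n : ℕ) : α → E :=
  {x | n * w x < ‖g x‖}ᶜ.indicator (w⁻¹ • g)

lemma norm_smul_apply_of_pos (hw : ∀ x, 0 < w x) (f : α → E) (x : α) :
    ‖(w • f) x‖ = w x * ‖f x‖ :=
  norm_smul_of_nonneg (hw x).le (f x)

lemma norm_divTruncation_le (hw : ∀ x, 0 < w x) (n : ℕ) (x : α) :
    ‖divTruncation w g n x‖ ≤ n := by
  by_cases hx : n * w x < ‖g x‖
  · simp [divTruncation, hx]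
  · have hle : (w x)⁻¹ * ‖g x‖ ≤ n := by
      rw [inv_mul_le_iff₀ (hw x), mul_comm]
      exact not_lt.1 hx
    simpa [divTruncation, hx, norm_smul, abs_of_pos (hw x)] using hle

lemma smul_divTruncation (hw : ∀ x, 0 < w x) (n : ℕ) :
    w • divTruncation w g n = {x | n * w x < ‖g x‖}ᶜ.indicator g := by
  ext x
  by_cases hx : n * w x < ‖g x‖ <;> simp [divTruncation, hx, (hw x).ne']

lemma sub_smul_divTruncation (hw : ∀ x, 0 < w x) (n : ℕ) :
    g - w • divTruncation w g n = {x | n * w x < ‖g x‖}.indicator g := by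
  rw [smul_divTruncation hw, indicator_compl, sub_sub_cancel]

end Truncation

section Weighted

variable {Ω E : Type*} [MeasurableSpace Ω] [SeminormedAddCommGroup E] {Φ : ℝ → ℝ} {μ : Measure Ω}
  {w : Ω → ℝ} {g : Ω → E}

/-- The functions underlying the Orlicz space `L_Φ(μ; E)`, before passing to a.e. classes. -/
def orliczClass (Φ : ℝ → ℝ) (μ : Measure Ω) : Set (Ω → E) :=
  {g | StronglyMeasurable g ∧ orliczModular Φ μ (fun ω => ‖g ω‖) < ⊤}

/-- The space `m_w` of essentially bounded functions with finite weighted modular. -/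
def boundedWeightedOrliczClass (Φ : ℝ → ℝ) (w : Ω → ℝ) (μ : Measure Ω) : Set (Ω → E) :=
  {f | StronglyMeasurable f ∧ (∃ M : ℝ, ∀ᵐ ω ∂μ, ‖f ω‖ ≤ M) ∧
    orliczModular Φ μ (fun ω => w ω * ‖f ω‖) < ⊤}

lemma measurableSet_nat_mul_lt_norm (hw : Measurable w) (hg : StronglyMeasurable g) (n : ℕ) :
    MeasurableSet {ω | n * w ω < ‖g ω‖} :=
  measurableSet_lt (hw.const_mul _) hg.norm.measurable

variable [NormedSpace ℝ E]

lemma divTruncation_mem_boundedWeightedOrliczClass (hΦ_zero : Φ 0 = 0) (hw_meas : Measurable w)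
    (hw_pos : ∀ ω, 0 < w ω) (hg : g ∈ orliczClass Φ μ) (n : ℕ) :
    divTruncation w g n ∈ boundedWeightedOrliczClass Φ w μ := by
  have hA := (measurableSet_nat_mul_lt_norm hw_meas hg.1 n).compl
  refine ⟨(hw_meas.inv.stronglyMeasurable.smul hg.1).indicator hA,
    ⟨n, ae_of_all _ (norm_divTruncation_le hw_pos n)⟩, ?_⟩
  simp only [← norm_smul_apply_of_pos hw_pos, smul_divTruncation hw_pos,
    norm_indicator_eq_indicator_norm]
  exact (orliczModular_indicator hΦ_zero hA).trans_le (setLIntegral_le_lintegral _ _)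
    |>.trans_lt hg.2

lemma tendsto_luxemburgNorm_sub_smul_divTruncation (hΦ_zero : Φ 0 = 0)
    (hΔ₂ : DeltaTwoCondition Φ) (hw_meas : Measurable w) (hw_pos : ∀ ω, 0 < w ω)
    (hg : g ∈ orliczClass Φ μ) :
    Tendsto (fun n => luxemburgNorm Φ μ fun ω => ‖(g - w • divTruncation w g n) ω‖)
      atTop (𝓝 0) := by
  simp only [sub_smul_divTruncation hw_pos, norm_indicator_eq_indicator_norm]
  exact tendsto_luxemburgNorm_indicator hΦ_zero hΔ₂ (fun ω => norm_nonneg (g ω)) hg.2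
    (measurableSet_nat_mul_lt_norm hw_meas hg.1)
    (antitone_setOf_nat_mul_lt fun ω => (hw_pos ω).le) (iInter_setOf_nat_mul_lt_eq_empty hw_pos)

lemma smul_mem_orliczClass (hw_meas : Measurable w) (hw_pos : ∀ ω, 0 < w ω) {f : Ω → E}
    (hf : f ∈ boundedWeightedOrliczClass Φ w μ) : w • f ∈ orliczClass Φ μ := by
  refine ⟨hw_meas.stronglyMeasurable.smul hf.1, ?_⟩
  simpa only [norm_smul_apply_of_pos hw_pos] using hf.2.2

end Weighted

theorem weighted_orlicz_isometric_to_orlicz_general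
    {Ω E : Type*} [MeasurableSpace Ω] [SeminormedAddCommGroup E] [NormedSpace ℝ E]
    (μ : Measure Ω) {Φ : ℝ → ℝ} (hΦ_zero : Φ 0 = 0) (hΔ₂ : DeltaTwoCondition Φ)
    {w : Ω → ℝ} (hw_meas : Measurable w) (hw_pos : ∀ ω, 0 < w ω) :
    (∀ f ∈ boundedWeightedOrliczClass (E := E) Φ w μ, w • f ∈ orliczClass Φ μ) ∧
    (∀ f g : Ω → E, w • (f + g) = w • f + w • g) ∧
    (∀ (c : ℝ) (f : Ω → E), w • (c • f) = c • (w • f)) ∧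
    (∀ f g : Ω → E, w • f =ᵐ[μ] w • g → f =ᵐ[μ] g) ∧
    (∀ f : Ω → E, luxemburgNorm Φ μ (fun ω => ‖(w • f) ω‖) =
      luxemburgNorm Φ μ (fun ω => w ω * ‖f ω‖)) ∧
    (∀ g ∈ orliczClass (E := E) Φ μ, ∀ ε : ℝ, 0 < ε →
      ∃ f ∈ boundedWeightedOrliczClass Φ w μ,
        luxemburgNorm Φ μ (fun ω => ‖(g - w • f : Ω → E) ω‖) < ε) := by
  refine ⟨fun f hf => smul_mem_orliczClass hw_meas hw_pos hf, smul_add w,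
    fun c f => funext fun ω => smul_comm (w ω) c (f ω), fun f g h => ?_, fun f => ?_,
    fun g hg ε hε => ?_⟩
  · filter_upwards [h] with ω hω
    exact smul_right_injective E (hw_pos ω).ne' hω
  · simp only [norm_smul_apply_of_pos hw_pos]
  · obtain ⟨n, hn⟩ := ((tendsto_luxemburgNorm_sub_smul_divTruncation hΦ_zero hΔ₂ hw_meas hw_pos
      hg).eventually_lt_const hε).exists
    exact ⟨_, divTruncation_mem_boundedWeightedOrliczClass hΦ_zero hw_meas hw_pos hg n, hn⟩

/-- **The weighted Orlicz space is isometric to the Orlicz space (Theorem 4,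
commutative form).**  Let `μ` be σ-finite, `Φ` an N-function with the
`(δ₂,Δ₂)`-condition and `w : Ω → (0,∞)` measurable.  With
`m_w = {f essentially bounded measurable : ∫ Φ(w·|f|) dμ < ∞}`, its norm
`‖f‖_{Φ,w}`, and the Luxemburg norm `‖·‖_Φ` on
`L_Φ(μ) = {g : ∫ Φ(|g|) dμ < ∞}`, the map `U f = w·f` is a linear injection
(modulo a.e. equality) of `m_w` into `L_Φ(μ)` with `‖U f‖_Φ = ‖f‖_{Φ,w}`,
and its range is dense in `L_Φ(μ)`. -/
theorem weighted_orlicz_isometric_to_orlicz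
    {Ω : Type*} [MeasurableSpace Ω] (μ : Measure Ω) [SigmaFinite μ]
    (p Φ : ℝ → ℝ)
    (hp_mono : MonotoneOn p (Ici (0 : ℝ)))
    (hp_rc : ∀ s : ℝ, 0 ≤ s → ContinuousWithinAt p (Ici s) s)
    (hp_zero : p 0 = 0)
    (hp_pos : ∀ s : ℝ, 0 < s → 0 < p s)
    (hp_top : Tendsto p atTop atTop)
    (hΦ : ∀ t : ℝ, 0 ≤ t → Φ t = ∫ s in (0 : ℝ)..t, p s)
    (hΔ₂ : ∀ k : ℝ, 0 < k → ∃ r : ℝ, 0 < r ∧ ∀ t : ℝ, 0 ≤ t → Φ (k * t) ≤ r * Φ t)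
    (w : Ω → ℝ) (hw_meas : Measurable w) (hw_pos : ∀ ω, 0 < w ω)
    (m : Set (Ω → ℝ))
    (hm : m = {f : Ω → ℝ | Measurable f ∧ (∃ M : ℝ, ∀ᵐ ω ∂μ, |f ω| ≤ M) ∧
      ∫⁻ ω, ENNReal.ofReal (Φ (w ω * |f ω|)) ∂μ < ⊤})
    (nrmw nrmΦ : (Ω → ℝ) → ℝ)
    (hnrmw : ∀ f : Ω → ℝ, nrmw f = sInf {l : ℝ | 0 < l ∧
      ∫⁻ ω, ENNReal.ofReal (Φ (w ω * |f ω| / l)) ∂μ ≤ 1})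
    (hnrmΦ : ∀ g : Ω → ℝ, nrmΦ g = sInf {l : ℝ | 0 < l ∧
      ∫⁻ ω, ENNReal.ofReal (Φ (|g ω| / l)) ∂μ ≤ 1}) :
    -- `U f = w • f` maps `m` into `L_Φ(μ)`
    (∀ f ∈ m, Measurable (w * f) ∧
      ∫⁻ ω, ENNReal.ofReal (Φ |(w * f) ω|) ∂μ < ⊤) ∧
    -- `U` is linear
    (∀ f g : Ω → ℝ, w * (f + g) = w * f + w * g) ∧
    (∀ (c : ℝ) (f : Ω → ℝ), w * (c • f) = c • (w * f)) ∧
    -- `U` is injective modulo a.e. equality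
    (∀ f ∈ m, ∀ g ∈ m, w * f =ᵐ[μ] w * g → f =ᵐ[μ] g) ∧
    -- `U` is isometric
    (∀ f ∈ m, nrmΦ (w * f) = nrmw f) ∧
    -- the range of `U` is dense in `L_Φ(μ)`
    (∀ g : Ω → ℝ, Measurable g → ∫⁻ ω, ENNReal.ofReal (Φ |g ω|) ∂μ < ⊤ →
      ∀ ε : ℝ, 0 < ε → ∃ f ∈ m, nrmΦ (g - w * f) < ε) := by
  have hΦ_zero : Φ 0 = 0 := by simp [hΦ 0 le_rfl]
  obtain rfl : nrmΦ = fun g => luxemburgNorm Φ μ fun ω => |g ω| := funext hnrmΦ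
  obtain rfl : nrmw = fun f => luxemburgNorm Φ μ fun ω => w ω * |f ω| := funext hnrmw
  obtain rfl : m = boundedWeightedOrliczClass Φ w μ := by
    simpa only [boundedWeightedOrliczClass, orliczModular, stronglyMeasurable_iff_measurable,
      Real.norm_eq_abs] using hm
  obtain ⟨h_maps, h_add, h_smul, h_inj, h_isom, h_dense⟩ :=
    weighted_orlicz_isometric_to_orlicz_general (E := ℝ) μ hΦ_zero hΔ₂ hw_meas hw_pos
  exact ⟨fun f hf => (h_maps f hf).imp_left StronglyMeasurable.measurable, h_add, h_smul,
    fun f _ g _ => h_inj f g, fun f _ => h_isom f,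
    fun g hg hgΦ => h_dense g ⟨hg.stronglyMeasurable, hgΦ⟩⟩
end

section
/- Let β > 1, Φ_β(t) = t^β(ln t + 1) for t ≥ 1, w_i = (i² · e^{2βi²} · (2i²+1))⁻¹ and h_i = e^{βi²}(i²+1) for integers i ≥ 2. For a finitely supported function x : ℕ → [0,∞) with x_i ∈ {0} ∪ [1,∞) for all i and support contained in {2,3,…}, define the two modulars ρ₁(x) = Σ_{i ∈ supp x} Φ_β(e^{i²}·x_i)·w_i and ρ₂(x) = Σ_{i ∈ supp x} h_i·Φ_β(x_i)·w_i. Then for every C > 0 there exists such a finitely supported x (namely x_i = e^{i²} for 2 ≤ i ≤ n and x_i = 0 otherwise, for n large enough) with ρ₁(x) < 1 and ρ₂(x) > C. In particular there is no constant C > 0 with ρ₂(x) ≤ C whenever ρ₁(x) ≤ 1. -/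
open Real Finset

/-!
On the truncations `x i = e^{i²}`, `2 ≤ i ≤ n`, all exponentials cancel against the weights: the
`i`-th term of `ρ₁ x` becomes `1 / i²`, and `∑_{i ≥ 2} 1 / i²` telescopes to less than `1`, while
the `i`-th term of `ρ₂ x` becomes `(i² + 1)² / (i² (2 i² + 1)) ≥ 1 / 2`, so that `ρ₂ x` grows
linearly in `n`. The cancellation is an identity in `t = i²`.
-/

lemma sum_Ioc_one_inv_sq_lt_one {K : Type*} [Field K] [LinearOrder K] [IsStrictOrderedRing K]
    (n : ℕ) : ∑ i ∈ Ioc 1 n, ((i : K) ^ 2)⁻¹ < 1 := by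
  rcases n.eq_zero_or_pos with rfl | hn
  · simp
  · calc ∑ i ∈ Ioc 1 n, ((i : K) ^ 2)⁻¹ ≤ ((1 : ℕ) : K)⁻¹ - (n : K)⁻¹ :=
          sum_Ioc_inv_sq_le_sub one_ne_zero hn
      _ < 1 := by
          rw [Nat.cast_one, inv_one]
          exact sub_lt_self 1 (by positivity)

/-- The Orlicz function `Φ_β(t) = t^β (ln t + 1)` of the Example, by its formula for `1 ≤ t`; below
`1` the two need not agree. -/
noncomputable def powLog (β t : ℝ) : ℝ := t ^ β * (log t + 1)

/-- The weight `ν(f_i)` of the trace `ν`, as a function of `t = i²`. -/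
noncomputable def weight (β t : ℝ) : ℝ := (t * exp (2 * β * t) * (2 * t + 1))⁻¹

/-- The density `h` of the trace `μ` with respect to `ν`, as a function of `t = i²`. -/
noncomputable def density (β t : ℝ) : ℝ := exp (β * t) * (t + 1)

section Cancellation

variable {t : ℝ}

lemma powLog_exp (β t : ℝ) : powLog β (exp t) = density β t := by
  rw [powLog, density, ← exp_mul, log_exp, mul_comm t β]

lemma powLog_exp_mul_exp_mul_weight (β : ℝ) (ht : 0 ≤ t) :
    powLog β (exp t * exp t) * weight β t = t⁻¹ := by
  have powLog_sq : powLog β (exp t * exp t) = exp (2 * β * t) * (2 * t + 1) := by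
    rw [← exp_add, ← two_mul, powLog_exp, density, mul_left_comm, mul_assoc]
  have hne : exp (2 * β * t) * (2 * t + 1) ≠ 0 := by positivity
  rw [powLog_sq, weight, mul_assoc t, mul_inv_rev, mul_inv_cancel_left₀ hne]

lemma density_mul_powLog_exp_mul_weight (β t : ℝ) :
    density β t * powLog β (exp t) * weight β t = (t + 1) ^ 2 / (t * (2 * t + 1)) := by
  have exp_two_mul : exp (2 * β * t) = exp (β * t) * exp (β * t) := by
    rw [← exp_add, ← two_mul, mul_assoc]
  rw [powLog_exp, density, weight, exp_two_mul]
  field_simp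

lemma half_le_density_mul_powLog_exp_mul_weight (β : ℝ) (ht : 0 < t) :
    1 / 2 ≤ density β t * powLog β (exp t) * weight β t := by
  rw [density_mul_powLog_exp_mul_weight, div_le_div_iff₀ (by norm_num) (by positivity)]
  linarith

end Cancellation

/-- The sequence `i ↦ e^{i²}` truncated to the finite set `s`, on which the two modulars are
compared. -/
noncomputable def expSq (s : Finset ℕ) : ℕ →₀ ℝ :=
  Finsupp.indicator s fun i _ => exp ((i : ℝ) ^ 2)

namespace expSq

variable {s : Finset ℕ} {i : ℕ}

lemma apply_of_mem (hi : i ∈ s) : expSq s i = exp ((i : ℝ) ^ 2) :=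
  Finsupp.indicator_of_mem hi _

lemma apply_of_notMem (hi : i ∉ s) : expSq s i = 0 :=
  Finsupp.indicator_of_notMem hi _

lemma support_eq (s : Finset ℕ) : (expSq s).support = s :=
  (Finsupp.support_indicator_subset _ _).antisymm fun _ hi =>
    Finsupp.mem_support_iff.mpr <| (apply_of_mem hi).trans_ne (exp_ne_zero _)

lemma eq_zero_or_one_le (s : Finset ℕ) (i : ℕ) : expSq s i = 0 ∨ 1 ≤ expSq s i := by
  by_cases hi : i ∈ s
  · exact .inr (apply_of_mem hi ▸ one_le_exp (sq_nonneg _))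
  · exact .inl (apply_of_notMem hi)

lemma sum_support {M : Type*} [AddCommMonoid M] (s : Finset ℕ) (f : ℕ → ℝ → M) :
    ∑ i ∈ (expSq s).support, f i (expSq s i) = ∑ i ∈ s, f i (exp ((i : ℝ) ^ 2)) := by
  rw [support_eq]
  exact sum_congr rfl fun i hi => by rw [apply_of_mem hi]

end expSq

section Modulars

variable {β : ℝ} {Φ : ℝ → ℝ}

lemma modular_expSq_eq_sum_inv_sq (hΦ : ∀ t : ℝ, 1 ≤ t → Φ t = powLog β t) (s : Finset ℕ) :
    ∑ i ∈ (expSq s).support, Φ (exp ((i : ℝ) ^ 2) * expSq s i) * weight β ((i : ℝ) ^ 2) =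
      ∑ i ∈ s, ((i : ℝ) ^ 2)⁻¹ := by
  rw [expSq.sum_support s fun i y => Φ (exp ((i : ℝ) ^ 2) * y) * weight β ((i : ℝ) ^ 2)]
  refine sum_congr rfl fun i _ => ?_
  have one_le_exp_sq : 1 ≤ exp ((i : ℝ) ^ 2) := one_le_exp (sq_nonneg _)
  rw [hΦ _ (one_le_mul_of_one_le_of_one_le one_le_exp_sq one_le_exp_sq),
    powLog_exp_mul_exp_mul_weight β (sq_nonneg _)]

lemma card_div_two_le_modular_expSq (hΦ : ∀ t : ℝ, 1 ≤ t → Φ t = powLog β t)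
    {s : Finset ℕ} (hs : 0 ∉ s) :
    (#s : ℝ) / 2 ≤ ∑ i ∈ (expSq s).support,
      density β ((i : ℝ) ^ 2) * Φ (expSq s i) * weight β ((i : ℝ) ^ 2) := by
  have half_le_term : ∀ i ∈ s,
      1 / 2 ≤ density β ((i : ℝ) ^ 2) * Φ (exp ((i : ℝ) ^ 2)) * weight β ((i : ℝ) ^ 2) := by
    intro i hi
    have hi_pos : (0 : ℝ) < i := Nat.cast_pos.mpr (Nat.pos_of_ne_zero (ne_of_mem_of_not_mem hi hs))
    rw [hΦ _ (one_le_exp (sq_nonneg _))]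
    exact half_le_density_mul_powLog_exp_mul_weight β (by positivity)
  rw [expSq.sum_support s fun i y => density β ((i : ℝ) ^ 2) * Φ y * weight β ((i : ℝ) ^ 2)]
  calc (#s : ℝ) / 2 = #s • (1 / 2 : ℝ) := by rw [nsmul_eq_mul, mul_one_div]
    _ ≤ ∑ i ∈ s, density β ((i : ℝ) ^ 2) * Φ (exp ((i : ℝ) ^ 2)) * weight β ((i : ℝ) ^ 2) :=
      card_nsmul_le_sum _ _ _ half_le_term

end Modulars

theorem example_modulars_not_equivalent_general
    (β : ℝ)
    (Φ : ℝ → ℝ) (hΦ : ∀ t : ℝ, 1 ≤ t → Φ t = t ^ β * (log t + 1))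
    (w h : ℕ → ℝ)
    (hw : ∀ i : ℕ, w i = ((i : ℝ) ^ 2 * exp (2 * β * (i : ℝ) ^ 2) * (2 * (i : ℝ) ^ 2 + 1))⁻¹)
    (hh : ∀ i : ℕ, h i = exp (β * (i : ℝ) ^ 2) * ((i : ℝ) ^ 2 + 1))
    (ρ₁ ρ₂ : (ℕ →₀ ℝ) → ℝ)
    (hρ₁ : ∀ x : ℕ →₀ ℝ, ρ₁ x = ∑ i ∈ x.support, Φ (exp ((i : ℝ) ^ 2) * x i) * w i)
    (hρ₂ : ∀ x : ℕ →₀ ℝ, ρ₂ x = ∑ i ∈ x.support, h i * Φ (x i) * w i) :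
    (∀ C : ℝ, ∃ x : ℕ →₀ ℝ,
      (∀ i, x i = 0 ∨ 1 ≤ x i) ∧ (∀ i ∈ x.support, 2 ≤ i) ∧ ρ₁ x < 1 ∧ C < ρ₂ x) ∧
    ¬ ∃ C : ℝ, ∀ x : ℕ →₀ ℝ,
      (∀ i, x i = 0 ∨ 1 ≤ x i) → (∀ i ∈ x.support, 2 ≤ i) → ρ₁ x ≤ 1 → ρ₂ x ≤ C := by
  obtain rfl : w = fun i : ℕ => weight β ((i : ℝ) ^ 2) := funext hw
  obtain rfl : h = fun i : ℕ => density β ((i : ℝ) ^ 2) := funext hh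
  have exists_witness : ∀ C : ℝ, ∃ x : ℕ →₀ ℝ,
      (∀ i, x i = 0 ∨ 1 ≤ x i) ∧ (∀ i ∈ x.support, 2 ≤ i) ∧ ρ₁ x < 1 ∧ C < ρ₂ x := by
    intro C
    obtain ⟨n, hn⟩ := exists_nat_gt (2 * C)
    refine ⟨expSq (Ioc 1 (n + 1)), expSq.eq_zero_or_one_le _, fun i hi => ?_, ?_, ?_⟩
    · rw [expSq.support_eq] at hi
      exact (mem_Ioc.mp hi).1
    · rw [hρ₁, modular_expSq_eq_sum_inv_sq hΦ]
      exact sum_Ioc_one_inv_sq_lt_one (n + 1)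
    · calc C < (n : ℝ) / 2 := by linarith
        _ = (#(Ioc 1 (n + 1)) : ℝ) / 2 := by rw [Nat.card_Ioc, Nat.add_sub_cancel]
        _ ≤ ρ₂ (expSq (Ioc 1 (n + 1))) := by
          rw [hρ₂]
          exact card_div_two_le_modular_expSq hΦ (by simp)
  refine ⟨exists_witness, fun ⟨C, hC⟩ => ?_⟩
  obtain ⟨x, hx_val, hx_supp, hx₁, hx₂⟩ := exists_witness C
  exact (hC x hx_val hx_supp hx₁.le).not_gt hx₂

/-- **The two modulars of the Example are not equivalent on finite sequences.**
For `β > 1`, `Φ_β(t) = t^β(ln t + 1)` (`t ≥ 1`), `w_i = (i²·e^{2βi²}·(2i²+1))⁻¹`,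
`h_i = e^{βi²}(i²+1)`, and the modulars `ρ₁(x) = Σ_{i ∈ supp x} Φ_β(e^{i²} x_i) w_i`,
`ρ₂(x) = Σ_{i ∈ supp x} h_i Φ_β(x_i) w_i` on finitely supported `x : ℕ → [0,∞)`
with values in `{0} ∪ [1,∞)` and support in `{2,3,…}`: for every `C > 0` there
is such an `x` with `ρ₁(x) < 1` and `ρ₂(x) > C`; in particular no constant
`C > 0` satisfies `ρ₂(x) ≤ C` whenever `ρ₁(x) ≤ 1`. -/
theorem example_modulars_not_equivalent
    (β : ℝ) (hβ : 1 < β)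
    (Φ : ℝ → ℝ) (hΦ : ∀ t : ℝ, 1 ≤ t → Φ t = t ^ β * (Real.log t + 1))
    (w h : ℕ → ℝ)
    (hw : ∀ i : ℕ, w i = ((i : ℝ) ^ 2 * Real.exp (2 * β * (i : ℝ) ^ 2) *
      (2 * (i : ℝ) ^ 2 + 1))⁻¹)
    (hh : ∀ i : ℕ, h i = Real.exp (β * (i : ℝ) ^ 2) * ((i : ℝ) ^ 2 + 1))
    (ρ₁ ρ₂ : (ℕ →₀ ℝ) → ℝ)
    (hρ₁ : ∀ x : ℕ →₀ ℝ, ρ₁ x = ∑ i ∈ x.support, Φ (Real.exp ((i : ℝ) ^ 2) * x i) * w i)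
    (hρ₂ : ∀ x : ℕ →₀ ℝ, ρ₂ x = ∑ i ∈ x.support, h i * Φ (x i) * w i) :
    (∀ C : ℝ, 0 < C → ∃ x : ℕ →₀ ℝ,
      (∀ i, x i = 0 ∨ 1 ≤ x i) ∧ (∀ i ∈ x.support, 2 ≤ i) ∧
      ρ₁ x < 1 ∧ C < ρ₂ x) ∧
    ¬ ∃ C : ℝ, 0 < C ∧ ∀ x : ℕ →₀ ℝ,
      (∀ i, x i = 0 ∨ 1 ≤ x i) → (∀ i ∈ x.support, 2 ≤ i) →
      ρ₁ x ≤ 1 → ρ₂ x ≤ C := by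
  obtain ⟨hwitness, hnot⟩ :=
    example_modulars_not_equivalent_general β Φ hΦ w h hw hh ρ₁ ρ₂ hρ₁ hρ₂
  exact ⟨fun C _ => hwitness C, fun ⟨C, _, hC⟩ => hnot ⟨C, hC⟩⟩
end
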